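/- Let Wdist(F) = inf_{R ∈ SO(2)} ‖F − R‖² and define W̃ : ℝ^{2×2} → ℝ by W̃(F) = 1 − 2·det F if ‖F‖² + 2·det F < 1, and W̃(F) = (√(‖F‖² + 2·det F) − 1)² + 1 − 2·det F otherwise. Then every rank-one convex function w : ℝ^{2×2} → ℝ with w ≤ Wdist satisfies w ≤ W̃; consequently, for every F ∈ ℝ^{2×2}, sup{w(F) : w rank-one convex, w ≤ Wdist} = W̃(F), i.e. W̃ is the rank-one convex envelope of Wdist on ℝ^{2×2}. -/

import Mathlib

/-!
Identify twice the conformal part of `F = !![a, b; c, d]` with the complex number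
`z F = (a + d) + (c - b) i`, so that `‖F‖² + 2 det F = |z F|²`. A rotation is a point `u` of the
unit circle, and `‖F - u‖² = |z F - u|² + 1 - 2 det F`; minimising over `u`,
`Wdist F = (|z F| - 1)² + 1 - 2 det F`, whereas `W̃ F = ((|z F| - 1)⁺)² + 1 - 2 det F`.

The first summand of `W̃` is convex and `det` is affine along rank-one lines, so `W̃` is a
competitor. For maximality only `|z F| < 1` matters. Let `N` be any matrix of rank one. Then
`|z N|² = ‖N‖² ≠ 0`, so the line through `F` in direction `N` leaves the unit disc on both sides
of `F`. At the two exit points `Wdist = 1 - 2 det`, which is affine on the line, so convexity of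
`w` on it gives `w F ≤ 1 - 2 det F = W̃ F`. Hence every notion of convexity between rank-one
convexity and convexity along the single direction `N` yields the same envelope.
-/

open Matrix

/-- Squared Frobenius norm of a real matrix. -/
noncomputable def frobSq {n : ℕ} (A : Matrix (Fin n) (Fin n) ℝ) : ℝ :=
  ∑ i, ∑ j, (A i j) ^ 2

/-- The special orthogonal group SO(2) as a set of real 2×2 matrices. -/
def SO2 : Set (Matrix (Fin 2) (Fin 2) ℝ) :=
  {Q | Qᵀ * Q = 1 ∧ Q.det = 1}

/-- Rank-one convexity for functions on real 2×2 matrices. -/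
def RankOneConvex (w : Matrix (Fin 2) (Fin 2) ℝ → ℝ) : Prop :=
  ∀ A B : Matrix (Fin 2) (Fin 2) ℝ, (B - A).rank = 1 →
    ∀ t ∈ Set.Icc (0 : ℝ) 1,
      w (t • A + (1 - t) • B) ≤ t * w A + (1 - t) * w B

/-- Squared Euclidean (Frobenius) distance to SO(2). -/
noncomputable def Wdist (F : Matrix (Fin 2) (Fin 2) ℝ) : ℝ :=
  sInf {x : ℝ | ∃ R ∈ SO2, x = frobSq (F - R)}

/-- The candidate relaxed energy. -/
noncomputable def Wtilde (F : Matrix (Fin 2) (Fin 2) ℝ) : ℝ :=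
  if frobSq F + 2 * F.det < 1 then 1 - 2 * F.det
  else (Real.sqrt (frobSq F + 2 * F.det) - 1) ^ 2 + 1 - 2 * F.det

/-- Convexity of `f` on every line parallel to `v`, each line being parametrised by `ℝ`. Rank-one
convexity is convexity along all matrices of rank one. -/
def ConvexAlong {E : Type*} [AddCommGroup E] [Module ℝ E] (v : E) (f : E → ℝ) : Prop :=
  ∀ x, ConvexOn ℝ Set.univ fun s : ℝ => f (x + s • v)

section ConvexAlong

variable {E : Type*} [AddCommGroup E] [Module ℝ E] {v : E} {f g : E → ℝ}

lemma ConvexAlong.add (hf : ConvexAlong v f) (hg : ConvexAlong v g) :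
    ConvexAlong v fun x => f x + g x :=
  fun x => (hf x).add (hg x)

lemma convexAlong_of_convexOn (hf : ConvexOn ℝ Set.univ f) (v : E) : ConvexAlong v f := by
  intro x
  have hline : (fun s : ℝ => f (x + s • v)) = f ∘ AffineMap.lineMap x (x + v) := by
    ext s
    simp [AffineMap.lineMap_apply, add_comm]
  rw [hline, ← Set.preimage_univ (f := AffineMap.lineMap x (x + v))]
  exact hf.comp_affineMap _

lemma ConvexAlong.le_max (hf : ConvexAlong v f) (x : E) {s t : ℝ} (hs : s ≤ 0) (ht : 0 ≤ t) :
    f x ≤ max (f (x + s • v)) (f (x + t • v)) := by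
  simpa using (hf x).le_max_of_mem_Icc (Set.mem_univ s) (Set.mem_univ t) ⟨hs, ht⟩

end ConvexAlong

section NormedSpace

variable {E : Type*} [NormedAddCommGroup E] [NormedSpace ℝ E]

lemma exists_nonneg_norm_add_smul_eq {x v : E} {r : ℝ} (hx : ‖x‖ ≤ r) (hv : v ≠ 0) :
    ∃ t : ℝ, 0 ≤ t ∧ ‖x + t • v‖ = r := by
  have hv' : 0 < ‖v‖ := norm_pos_iff.2 hv
  have hT : 0 ≤ (r + ‖x‖) / ‖v‖ := div_nonneg (by linarith [norm_nonneg x]) hv'.le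
  have hfar : r ≤ ‖x + ((r + ‖x‖) / ‖v‖) • v‖ := by
    have hsmul : ‖((r + ‖x‖) / ‖v‖) • v‖ = r + ‖x‖ := by
      rw [norm_smul, Real.norm_of_nonneg hT, div_mul_cancel₀ _ hv'.ne']
    have := norm_sub_le_norm_add (((r + ‖x‖) / ‖v‖) • v) x
    rw [add_comm x]
    linarith
  have hcont : Continuous fun t : ℝ => ‖x + t • v‖ := by fun_prop
  obtain ⟨t, ht, htr⟩ := intermediate_value_Icc hT hcont.continuousOn ⟨by simpa using hx, hfar⟩
  exact ⟨t, ht.1, htr⟩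

lemma exists_norm_eq_one_norm_sub_eq [Nontrivial E] (z : E) :
    ∃ u : E, ‖u‖ = 1 ∧ ‖z - u‖ = |‖z‖ - 1| := by
  obtain ⟨u, hu, hz⟩ : ∃ u : E, ‖u‖ = 1 ∧ z = ‖z‖ • u := by
    rcases eq_or_ne z 0 with rfl | hz
    · obtain ⟨u, hu⟩ := exists_norm_eq E zero_le_one
      exact ⟨u, hu, by simp⟩
    · exact ⟨‖z‖⁻¹ • z, norm_smul_inv_norm hz, (smul_inv_smul₀ (norm_ne_zero_iff.2 hz) z).symm⟩
  have hsub : z - u = (‖z‖ - 1) • u := by rw [sub_smul, one_smul, ← hz]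
  exact ⟨u, hu, by rw [hsub, norm_smul, hu, mul_one, Real.norm_eq_abs]⟩

end NormedSpace

lemma convexOn_sq_max_norm_sub {E : Type*} [SeminormedAddCommGroup E] [NormedSpace ℝ E] (r : ℝ) :
    ConvexOn ℝ Set.univ fun x : E => max (‖x‖ - r) 0 ^ 2 :=
  ((convexOn_univ_norm.sub (concaveOn_const r convex_univ)).sup (convexOn_const 0 convex_univ)).pow
    (fun _ _ => le_max_right _ _) 2

lemma det_eq_zero_of_rank_lt_card {n K : Type*} [Fintype n] [DecidableEq n] [CommRing K]
    [IsDomain K] {A : Matrix n n K} (hA : A.rank < Fintype.card n) : A.det = 0 :=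
  by_contra fun h => hA.ne (rank_of_det_ne_zero h)

lemma rank_diagonal_single {n K : Type*} [Fintype n] [DecidableEq n] [Field K] (i : n) {c : K}
    (hc : c ≠ 0) : (diagonal (Pi.single i c)).rank = 1 := by
  classical
  have hsupport (j : n) : (Pi.single i c : n → K) j ≠ 0 ↔ j = i := by simp [Pi.single_apply, hc]
  rw [rank_diagonal, Fintype.card_congr (Equiv.subtypeEquivRight hsupport),
    Fintype.card_subtype_eq]

lemma det_add_smul_of_det_eq_zero {R : Type*} [CommRing R] {N : Matrix (Fin 2) (Fin 2) R}
    (hN : N.det = 0) (A : Matrix (Fin 2) (Fin 2) R) (s : R) :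
    (A + s • N).det = A.det + s * (A.adjugate * N).trace := by
  rw [det_fin_two] at hN
  simp only [det_fin_two, adjugate_fin_two, trace_fin_two, mul_apply, Fin.sum_univ_two,
    Matrix.add_apply, Matrix.smul_apply, smul_eq_mul, of_apply, cons_val', cons_val_zero,
    cons_val_one, cons_val_fin_one]
  linear_combination s ^ 2 * hN

lemma eq_zero_of_frobSq_eq_zero {n : ℕ} {A : Matrix (Fin n) (Fin n) ℝ} (hA : frobSq A = 0) :
    A = 0 := by
  have hrow (i : Fin n) : 0 ≤ ∑ j, A i j ^ 2 := Finset.sum_nonneg fun j _ => sq_nonneg _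
  ext i j
  have hi := (Finset.sum_eq_zero_iff_of_nonneg fun i _ => hrow i).1 hA i (Finset.mem_univ i)
  have hij := (Finset.sum_eq_zero_iff_of_nonneg fun j _ => sq_nonneg _).1 hi j (Finset.mem_univ j)
  exact (pow_eq_zero_iff two_ne_zero).1 hij

/-- Twice the conformal part of a real `2 × 2` matrix, as a complex number: the conformal matrix
`!![p, -q; q, p]` stands for `p + q i`, and the conformal part of `F` is its orthogonal projection
onto these matrices. -/
def conformalPart : Matrix (Fin 2) (Fin 2) ℝ →ₗ[ℝ] ℂ where
  toFun F := ⟨F 0 0 + F 1 1, F 1 0 - F 0 1⟩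
  map_add' A B := by apply Complex.ext <;> simp <;> ring
  map_smul' c A := by apply Complex.ext <;> simp <;> ring

section Wdist

variable {F N : Matrix (Fin 2) (Fin 2) ℝ} {w : Matrix (Fin 2) (Fin 2) ℝ → ℝ}

lemma norm_sq_conformalPart_sub (F : Matrix (Fin 2) (Fin 2) ℝ) (u : ℂ) :
    ‖conformalPart F - u‖ ^ 2 = (F 0 0 + F 1 1 - u.re) ^ 2 + (F 1 0 - F 0 1 - u.im) ^ 2 := by
  rw [Complex.sq_norm, Complex.normSq_apply]
  simp only [conformalPart, LinearMap.coe_mk, AddHom.coe_mk, Complex.sub_re, Complex.sub_im]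
  ring

lemma frobSq_add_two_mul_det (F : Matrix (Fin 2) (Fin 2) ℝ) :
    frobSq F + 2 * F.det = ‖conformalPart F‖ ^ 2 := by
  rw [← sub_zero (conformalPart F), norm_sq_conformalPart_sub, Complex.zero_re, Complex.zero_im]
  simp only [frobSq, Fin.sum_univ_two, det_fin_two]
  ring

lemma mem_SO2_iff {R : Matrix (Fin 2) (Fin 2) ℝ} :
    R ∈ SO2 ↔ ∃ u : ℂ, ‖u‖ = 1 ∧ !![u.re, -u.im; u.im, u.re] = R := by
  have hSO : R ∈ SO2 ↔ R ∈ specialOrthogonalGroup (Fin 2) ℝ := by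
    rw [mem_specialOrthogonalGroup_iff, mem_orthogonalGroup_iff']
    rfl
  have hnorm (u : ℂ) : ‖u‖ = 1 ↔ u.re ^ 2 + u.im ^ 2 = 1 := by
    rw [← pow_eq_one_iff_of_nonneg (norm_nonneg u) two_ne_zero, Complex.sq_norm,
      Complex.normSq_apply, sq, sq]
  rw [hSO]
  constructor
  · intro hR
    obtain ⟨hdiag, hoff, hone⟩ := mem_specialOrthogonalGroup_fin_two_iff.1 hR
    refine ⟨⟨R 0 0, R 1 0⟩, (hnorm _).2 (by rw [← hone, hoff, neg_sq]), ?_⟩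
    rw [eta_fin_two R, ← hdiag, hoff]
    simp
  · rintro ⟨u, hu, rfl⟩
    exact of_mem_specialOrthogonalGroup_fin_two_iff.2
      ⟨rfl, rfl, by rw [neg_sq]; exact (hnorm u).1 hu⟩

lemma frobSq_sub_rotation (F : Matrix (Fin 2) (Fin 2) ℝ) {u : ℂ} (hu : ‖u‖ = 1) :
    frobSq (F - !![u.re, -u.im; u.im, u.re]) =
      ‖conformalPart F - u‖ ^ 2 + (1 - 2 * F.det) := by
  have hu' : u.re * u.re + u.im * u.im = 1 := by
    rw [← Complex.normSq_apply, ← Complex.sq_norm, hu, one_pow]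
  rw [norm_sq_conformalPart_sub]
  simp only [frobSq, Fin.sum_univ_two, det_fin_two, Matrix.sub_apply, of_apply, cons_val',
    cons_val_zero, cons_val_one, cons_val_fin_one]
  linear_combination hu'

lemma Wdist_eq (F : Matrix (Fin 2) (Fin 2) ℝ) :
    Wdist F = (‖conformalPart F‖ - 1) ^ 2 + (1 - 2 * F.det) := by
  apply IsLeast.csInf_eq
  constructor
  · obtain ⟨u, hu, hdist⟩ := exists_norm_eq_one_norm_sub_eq (conformalPart F)
    exact ⟨_, mem_SO2_iff.2 ⟨u, hu, rfl⟩, by rw [frobSq_sub_rotation F hu, hdist, sq_abs]⟩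
  · rintro _ ⟨R, hR, rfl⟩
    obtain ⟨u, hu, rfl⟩ := mem_SO2_iff.1 hR
    have hdist : |‖conformalPart F‖ - 1| ≤ ‖conformalPart F - u‖ := by
      simpa only [hu] using abs_norm_sub_norm_le (conformalPart F) u
    rw [frobSq_sub_rotation F hu, ← sq_abs (‖conformalPart F‖ - 1)]
    gcongr

lemma Wtilde_eq (F : Matrix (Fin 2) (Fin 2) ℝ) :
    Wtilde F = max (‖conformalPart F‖ - 1) 0 ^ 2 + (1 - 2 * F.det) := by
  have hz := norm_nonneg (conformalPart F)
  rw [Wtilde, frobSq_add_two_mul_det, Real.sqrt_sq hz]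
  simp only [sq_lt_one_iff₀ hz]
  split_ifs with h
  · rw [max_eq_right (by linarith)]
    ring
  · rw [max_eq_left (by linarith)]
    ring

lemma Wtilde_eq_Wdist (hF : 1 ≤ ‖conformalPart F‖) : Wtilde F = Wdist F := by
  rw [Wtilde_eq, Wdist_eq, max_eq_left (sub_nonneg.2 hF)]

lemma Wtilde_eq_of_norm_le_one (hF : ‖conformalPart F‖ ≤ 1) : Wtilde F = 1 - 2 * F.det := by
  rw [Wtilde_eq, max_eq_right (sub_nonpos.2 hF), zero_pow two_ne_zero, zero_add]

lemma Wtilde_le_Wdist (F : Matrix (Fin 2) (Fin 2) ℝ) : Wtilde F ≤ Wdist F := by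
  rcases le_total 1 ‖conformalPart F‖ with hF | hF
  · exact (Wtilde_eq_Wdist hF).le
  · rw [Wtilde_eq_of_norm_le_one hF, Wdist_eq]
    exact le_add_of_nonneg_left (sq_nonneg _)

lemma rankOneConvex_iff_convexAlong :
    RankOneConvex w ↔ ∀ N : Matrix (Fin 2) (Fin 2) ℝ, N.rank = 1 → ConvexAlong N w := by
  constructor
  · intro hw N hN F
    refine ⟨convex_univ, fun s _ t _ a b ha hb hab => ?_⟩
    obtain rfl : b = 1 - a := by linarith
    rcases eq_or_ne s t with rfl | hst
    · simp [← add_mul]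
    have hrank : (F + t • N - (F + s • N)).rank = 1 := by
      rw [add_sub_add_left_eq_sub, ← sub_smul, rank_smul_of_mem_nonZeroDivisors N
        (mem_nonZeroDivisors_of_ne_zero (sub_ne_zero.2 hst.symm)), hN]
    have hpoint : a • (F + s • N) + (1 - a) • (F + t • N) = F + (a • s + (1 - a) • t) • N := by
      module
    simpa only [hpoint, smul_eq_mul] using hw _ _ hrank a ⟨ha, sub_nonneg.1 hb⟩
  · intro hw A B hAB t ht
    have hpoint : t • A + (1 - t) • B = A + (t • (0 : ℝ) + (1 - t) • (1 : ℝ)) • (B - A) := by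
      module
    simpa [hpoint] using (hw (B - A) hAB A).2 (Set.mem_univ 0) (Set.mem_univ 1) ht.1
      (sub_nonneg.2 ht.2) (add_sub_cancel t 1)

lemma convexAlong_const_add_mul_det (hN : N.det = 0) (k c : ℝ) :
    ConvexAlong N fun F => k + c * F.det := by
  refine fun F => ⟨convex_univ, fun s _ t _ a b _ _ hab => le_of_eq ?_⟩
  simp only [det_add_smul_of_det_eq_zero hN, smul_eq_mul]
  linear_combination (-(k + c * F.det)) * hab

lemma det_eq_zero_of_rank_eq_one (hN : N.rank = 1) : N.det = 0 :=
  det_eq_zero_of_rank_lt_card (by simp [hN])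

lemma rankOneConvex_Wtilde : RankOneConvex Wtilde := by
  refine rankOneConvex_iff_convexAlong.2 fun N hN => ?_
  have hconvex : ConvexAlong N fun F => max (‖conformalPart F‖ - 1) 0 ^ 2 :=
    convexAlong_of_convexOn ((convexOn_sq_max_norm_sub 1).comp_linearMap conformalPart) N
  have hdet := convexAlong_const_add_mul_det (det_eq_zero_of_rank_eq_one hN) 1 (-2)
  convert hconvex.add hdet using 2 with F
  rw [Wtilde_eq]
  ring

lemma conformalPart_ne_zero_of_rank_eq_one (hN : N.rank = 1) : conformalPart N ≠ 0 := by
  intro hz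
  have hfrob : frobSq N = 0 := by
    simpa [det_eq_zero_of_rank_eq_one hN, hz] using frobSq_add_two_mul_det N
  rw [eq_zero_of_frobSq_eq_zero hfrob, rank_zero] at hN
  exact zero_ne_one hN

lemma le_Wtilde_of_convexAlong (hN : N.rank = 1) (hw : ConvexAlong N w)
    (hle : ∀ G, w G ≤ Wdist G) (F : Matrix (Fin 2) (Fin 2) ℝ) : w F ≤ Wtilde F := by
  rcases le_or_gt 1 ‖conformalPart F‖ with hF | hF
  · exact (hle F).trans (Wtilde_eq_Wdist hF).ge
  have hconvex : ConvexAlong N fun G => w G + (-1 + 2 * G.det) :=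
    hw.add (convexAlong_const_add_mul_det (det_eq_zero_of_rank_eq_one hN) (-1) 2)
  have hcircle : ∀ G, ‖conformalPart G‖ = 1 → w G + (-1 + 2 * G.det) ≤ 0 := by
    intro G hG
    have := (hle G).trans_eq ((Wtilde_eq_Wdist hG.ge).symm.trans (Wtilde_eq_of_norm_le_one hG.le))
    linarith
  have hz := conformalPart_ne_zero_of_rank_eq_one hN
  obtain ⟨t, ht, htF⟩ := exists_nonneg_norm_add_smul_eq hF.le hz
  obtain ⟨s, hs, hsF⟩ := exists_nonneg_norm_add_smul_eq hF.le (neg_ne_zero.2 hz)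
  have hinside : w F + (-1 + 2 * F.det) ≤ 0 :=
    (hconvex.le_max F (neg_nonpos.2 hs) ht).trans <| max_le
      (hcircle _ (by simpa using hsF)) (hcircle _ (by simpa using htF))
  rw [Wtilde_eq_of_norm_le_one hF.le]
  linarith

end Wdist

theorem rank_one_convex_envelope_of_Wdist_general {N : Matrix (Fin 2) (Fin 2) ℝ}
    (hN : N.rank = 1) {C : (Matrix (Fin 2) (Fin 2) ℝ → ℝ) → Prop}
    (hrank : ∀ w, RankOneConvex w → C w) (hline : ∀ w, C w → ConvexAlong N w) :
    (∀ w : Matrix (Fin 2) (Fin 2) ℝ → ℝ,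
        C w → (∀ G, w G ≤ Wdist G) → ∀ G, w G ≤ Wtilde G) ∧
    ∀ F : Matrix (Fin 2) (Fin 2) ℝ,
      sSup {y : ℝ | ∃ w : Matrix (Fin 2) (Fin 2) ℝ → ℝ,
        C w ∧ (∀ G, w G ≤ Wdist G) ∧ y = w F} = Wtilde F := by
  have hmax : ∀ w, C w → (∀ G, w G ≤ Wdist G) → ∀ G, w G ≤ Wtilde G :=
    fun w hw hle => le_Wtilde_of_convexAlong hN (hline w hw) hle
  refine ⟨hmax, fun F => IsGreatest.csSup_eq ⟨?_, ?_⟩⟩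
  · exact ⟨Wtilde, hrank Wtilde rankOneConvex_Wtilde, Wtilde_le_Wdist, rfl⟩
  · rintro _ ⟨w, hw, hle, rfl⟩
    exact hmax w hw hle F

theorem rank_one_convex_envelope_of_Wdist :
    (∀ w : Matrix (Fin 2) (Fin 2) ℝ → ℝ,
        RankOneConvex w → (∀ G, w G ≤ Wdist G) → ∀ G, w G ≤ Wtilde G) ∧
    ∀ F : Matrix (Fin 2) (Fin 2) ℝ,
      sSup {y : ℝ | ∃ w : Matrix (Fin 2) (Fin 2) ℝ → ℝ,
        RankOneConvex w ∧ (∀ G, w G ≤ Wdist G) ∧ y = w F} = Wtilde F := by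
  have hN := rank_diagonal_single (0 : Fin 2) (one_ne_zero (α := ℝ))
  exact rank_one_convex_envelope_of_Wdist_general hN (fun _ hw => hw)
    fun _ hw => rankOneConvex_iff_convexAlong.1 hw _ hN
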